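/- Let Ω ⊆ ℝ^d be a nonempty open set, with d ∈ ℕ, and let f ∈ L¹(Ω) be nonnegative. Suppose that the upper approximate limit f^∨ is upper semicontinuous on Ω and that M_Ω f(x) ≥ f^∨(x) for every x ∈ Ω. Then the non-centered maximal function M_Ω f : Ω → [0,∞] is continuous on Ω. -/

import Mathlib

open MeasureTheory Metric Filter Topology
open scoped ENNReal

/-- The non-centered Hardy–Littlewood maximal function of `f` relative to the open set
`Ω ⊆ ℝᵈ`: the supremum of the averages of `|f|` over all open balls contained in `Ω`
that contain `x`, valued in `[0,∞]`. -/
noncomputable def maximalFn {d : ℕ} (Ω : Set (EuclideanSpace ℝ (Fin d)))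
    (f : EuclideanSpace ℝ (Fin d) → ℝ) (x : EuclideanSpace ℝ (Fin d)) : ℝ≥0∞ :=
  ⨆ (z : EuclideanSpace ℝ (Fin d)) (r : ℝ) (_ : 0 < r) (_ : x ∈ ball z r)
    (_ : ball z r ⊆ Ω),
      (∫⁻ y in ball z r, ENNReal.ofReal |f y| ∂volume) / volume (ball z r)

/-- The upper approximate limit `f^∨(x)` with respect to Lebesgue measure, valued in the
extended reals (with the convention `inf ∅ = +∞`). -/
noncomputable def upperApproxLimit {d : ℕ}
    (f : EuclideanSpace ℝ (Fin d) → ℝ) (x : EuclideanSpace ℝ (Fin d)) : EReal :=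
  sInf ((fun t : ℝ => (t : EReal)) ''
    {t : ℝ | Tendsto
      (fun r : ℝ => volume {y | y ∈ ball x r ∧ t < f y} / volume (ball x r))
      (𝓝[>] (0 : ℝ)) (𝓝 0)})

/-!
Write `M` for the maximal function. A ball that contains `x` also contains every point near `x`,
so `M` is lower semicontinuous. For the upper semicontinuity at `x`, fix `T > M x` and consider the
pairs `(z, r)` such that `ball z r` is an admissible ball containing a point near `x`.

* Averages over large balls are at most `T`, because `f` is integrable; this confines `(z, r)` to a
  compact set, so it suffices to bound the averages near each pair `(z, r)` with `r ≥ 0`.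
* For `r > 0`, the average is continuous in `(z, r)`. If `ball z r ⊆ Ω` and `dist x z ≤ r`, then
  the average over `ball z r` is at most `M x`: contracting the closed ball towards `x` puts it
  inside `ball z r ∪ {x}`, by strict convexity, and then it may be enlarged a little within `Ω`.
* The pair `(x, 0)` is where `f^∨` enters: `f^∨ < T` near `x`, so `f ≤ T` almost everywhere near `x`
  by the Lebesgue density theorem.
-/

section MeasureMaximalFn

variable {X : Type*} [PseudoMetricSpace X] [MeasurableSpace X] {μ ν : Measure X} {Ω : Set X}
  {x z : X} {r : ℝ}

/-- The non-centered maximal function of the measure `ν` relative to the reference measure `μ` and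
to the set `Ω`. The maximal function of `f` is the case where `ν` has density `‖f‖ₑ`; working with
measures turns averages of `f` into quotients of measures of balls. -/
noncomputable def measureMaximalFn (μ ν : Measure X) (Ω : Set X) (x : X) : ℝ≥0∞ :=
  ⨆ (z : X) (r : ℝ) (_ : x ∈ ball z r) (_ : ball z r ⊆ Ω), ν (ball z r) / μ (ball z r)

lemma measureMaximalFn_le_iff {c : ℝ≥0∞} : measureMaximalFn μ ν Ω x ≤ c ↔
    ∀ z r, x ∈ ball z r → ball z r ⊆ Ω → ν (ball z r) / μ (ball z r) ≤ c := by
  simp only [measureMaximalFn, iSup_le_iff]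

lemma measure_ball_div_le_measureMaximalFn (hx : x ∈ ball z r) (hΩ : ball z r ⊆ Ω) :
    ν (ball z r) / μ (ball z r) ≤ measureMaximalFn μ ν Ω x :=
  measureMaximalFn_le_iff.1 le_rfl z r hx hΩ

lemma measureMaximalFn_restrict :
    measureMaximalFn μ (ν.restrict Ω) Ω = measureMaximalFn μ ν Ω := by
  funext x
  refine iSup_congr fun z ↦ iSup_congr fun r ↦ iSup_congr fun _ ↦ iSup_congr fun hΩ ↦ ?_
  rw [Measure.restrict_eq_self ν hΩ]

lemma lowerSemicontinuous_measureMaximalFn : LowerSemicontinuous (measureMaximalFn μ ν Ω) := by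
  intro x c hc
  simp only [measureMaximalFn, lt_iSup_iff] at hc
  obtain ⟨z, r, hx, hΩ, hc⟩ := hc
  filter_upwards [isOpen_ball.mem_nhds hx] with y hy
  exact hc.trans_le (measure_ball_div_le_measureMaximalFn hy hΩ)

lemma continuousAt_measure_ball [OpensMeasurableSpace X] [ProperSpace X]
    [IsFiniteMeasureOnCompacts ν] (hν : ν (sphere z r) = 0) :
    ContinuousAt (fun p : X × ℝ ↦ ν (ball p.1 p.2)) (z, r) := by
  refine tendsto_measure_of_ae_tendsto_indicator _ measurableSet_ball
    (fun _ ↦ measurableSet_ball) measurableSet_closedBall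
    (measure_closedBall_lt_top (x := z) (r := r + 2)).ne ?_ ?_
  · filter_upwards [prod_mem_nhds (ball_mem_nhds z one_pos) (Iio_mem_nhds (lt_add_one r))]
      with p ⟨hz, hr⟩
    rw [mem_ball] at hz
    rw [Set.mem_Iio] at hr
    exact ball_subset_closedBall.trans (closedBall_subset_closedBall' (by linarith))
  · filter_upwards [measure_eq_zero_iff_ae_notMem.1 hν] with y hy
    have hdist : ContinuousAt (fun p : X × ℝ ↦ dist y p.1) (z, r) := by fun_prop
    have hradius : ContinuousAt (fun p : X × ℝ ↦ p.2) (z, r) := continuousAt_snd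
    rcases lt_or_gt_of_ne (show dist y z ≠ r from hy) with hlt | hgt
    · filter_upwards [hdist.eventually_lt hradius hlt] with p hp
      exact iff_of_true hp hlt
    · filter_upwards [hradius.eventually_lt hdist hgt] with p hp
      exact iff_of_false hp.not_gt hgt.not_gt

end MeasureMaximalFn

section NormedSpace

variable {E : Type*} [NormedAddCommGroup E] [NormedSpace ℝ E]

lemma closedBall_lineMap_subset_insert_ball [StrictConvexSpace ℝ E] {x z : E} {r ε : ℝ}
    (hx : x ∈ closedBall z r) (hε₀ : 0 < ε) (hε₁ : ε < 1) :
    closedBall (AffineMap.lineMap z x ε) ((1 - ε) * r) ⊆ insert x (ball z r) := by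
  intro w hw
  have hε : 0 < 1 - ε := sub_pos.2 hε₁
  obtain ⟨y, rfl⟩ : ∃ y, w = ε • x + (1 - ε) • y :=
    ⟨(1 - ε)⁻¹ • (w - ε • x), by rw [smul_inv_smul₀ hε.ne', add_sub_cancel]⟩
  have hy : y ∈ closedBall z r := by
    have hdist : dist (ε • x + (1 - ε) • y) (AffineMap.lineMap z x ε) = (1 - ε) * dist y z := by
      rw [AffineMap.lineMap_apply_module, add_comm ((1 - ε) • z), dist_add_left, dist_smul₀,
        Real.norm_of_nonneg hε.le]
    rw [mem_closedBall, hdist] at hw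
    exact le_of_mul_le_mul_left hw hε
  rcases eq_or_ne x y with rfl | hxy
  · exact .inl (Convex.combo_self (add_sub_cancel _ _) _)
  · exact .inr (combo_mem_ball_of_ne hx hy hxy hε₀ hε (add_sub_cancel _ _))

variable [FiniteDimensional ℝ E] [MeasurableSpace E] [BorelSpace E] {μ ν : Measure E}
  [μ.IsAddHaarMeasure] {Ω : Set E} {x z : E} {r : ℝ} {T : ℝ≥0∞}

lemma tendsto_addHaar_ball_atTop [Nontrivial E] (x : E) :
    Tendsto (fun r ↦ μ (ball x r)) atTop (𝓝 ∞) := by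
  have hpow : Tendsto (fun r : ℝ ↦ ENNReal.ofReal (r ^ Module.finrank ℝ E)) atTop (𝓝 ∞) :=
    ENNReal.tendsto_ofReal_atTop.comp (tendsto_pow_atTop Module.finrank_pos.ne')
  have hunit : μ (ball 0 1) ≠ 0 := (measure_ball_pos μ 0 one_pos).ne'
  have hmul := ENNReal.Tendsto.mul_const (b := μ (ball 0 1)) hpow (.inl ENNReal.top_ne_zero)
  rw [ENNReal.top_mul hunit] at hmul
  refine hmul.congr' ?_
  filter_upwards [eventually_gt_atTop 0] with r hr
  rw [Measure.addHaar_ball_of_pos μ x hr]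

lemma eventually_forall_measure_ball_div_le [Nontrivial E] [IsFiniteMeasure ν] (hT : 0 < T) :
    ∀ᶠ r in atTop, ∀ z, ν (ball z r) / μ (ball z r) ≤ T := by
  have hlim : Tendsto (fun r ↦ ν Set.univ / μ (ball 0 r)) atTop (𝓝 0) := by
    simpa only [ENNReal.div_top] using ENNReal.Tendsto.const_div
      (tendsto_addHaar_ball_atTop (μ := μ) (0 : E)) (.inr (measure_ne_top ν Set.univ))
  filter_upwards [hlim.eventually_le_const hT] with r hr z
  calc ν (ball z r) / μ (ball z r) ≤ ν Set.univ / μ (ball 0 r) := by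
        rw [Measure.addHaar_ball_center μ z]
        gcongr
        exact Set.subset_univ _
    _ ≤ T := hr

lemma continuousAt_measure_ball_div_addHaar_ball [IsFiniteMeasure ν] (hν : ν ≪ μ) (hr : 0 < r) :
    ContinuousAt (fun p : E × ℝ ↦ ν (ball p.1 p.2) / μ (ball p.1 p.2)) (z, r) := by
  have hsphere : μ (sphere z r) = 0 := Measure.addHaar_sphere_of_ne_zero μ z hr.ne'
  exact ENNReal.Tendsto.div (continuousAt_measure_ball (hν hsphere))
    (.inr (measure_ball_pos μ z hr).ne') (continuousAt_measure_ball hsphere)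
    (.inr (measure_ne_top ν _))

lemma measure_ball_div_le_measureMaximalFn_of_closedBall_subset [IsFiniteMeasure ν]
    (hν : ν ≪ μ) (hΩ : IsOpen Ω) (hr : 0 < r) (hx : x ∈ closedBall z r)
    (hsub : closedBall z r ⊆ Ω) : ν (ball z r) / μ (ball z r) ≤ measureMaximalFn μ ν Ω x := by
  obtain ⟨δ, hδ, hδΩ⟩ := (isCompact_closedBall z r).exists_thickening_subset_open hΩ hsub
  rw [thickening_closedBall hδ hr.le] at hδΩ
  have hlim : Tendsto (fun s ↦ ν (ball z s) / μ (ball z s)) (𝓝[>] r)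
      (𝓝 (ν (ball z r) / μ (ball z r))) :=
    ((continuousAt_measure_ball_div_addHaar_ball hν hr).comp
      (f := fun s ↦ (z, s)) (by fun_prop)).tendsto.mono_left nhdsWithin_le_nhds
  refine le_of_tendsto hlim ?_
  filter_upwards [Ioo_mem_nhdsGT (lt_add_of_pos_left r hδ)] with s hs
  exact measure_ball_div_le_measureMaximalFn (closedBall_subset_ball hs.1 hx)
    ((ball_subset_ball hs.2.le).trans hδΩ)

lemma measure_ball_div_le_measureMaximalFn_of_mem_closedBall [StrictConvexSpace ℝ E]
    [IsFiniteMeasure ν] (hν : ν ≪ μ) (hΩ : IsOpen Ω) (hxΩ : x ∈ Ω) (hr : 0 < r)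
    (hx : x ∈ closedBall z r) (hsub : ball z r ⊆ Ω) :
    ν (ball z r) / μ (ball z r) ≤ measureMaximalFn μ ν Ω x := by
  have hlim : Tendsto (fun ε : ℝ ↦ ν (ball (AffineMap.lineMap z x ε) ((1 - ε) * r)) /
      μ (ball (AffineMap.lineMap z x ε) ((1 - ε) * r))) (𝓝[>] 0)
      (𝓝 (ν (ball z r) / μ (ball z r))) := by
    have hpath : Tendsto (fun ε : ℝ ↦ (AffineMap.lineMap z x ε, (1 - ε) * r)) (𝓝 0)
        (𝓝 (z, r)) := by
      have hcont : Continuous fun ε : ℝ ↦ (AffineMap.lineMap z x ε, (1 - ε) * r) := by fun_prop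
      simpa using hcont.tendsto 0
    exact ((continuousAt_measure_ball_div_addHaar_ball hν hr).tendsto.comp hpath).mono_left
      nhdsWithin_le_nhds
  refine le_of_tendsto hlim ?_
  filter_upwards [Ioo_mem_nhdsGT one_pos] with ε ⟨hε₀, hε₁⟩
  refine measure_ball_div_le_measureMaximalFn_of_closedBall_subset hν hΩ
    (mul_pos (sub_pos.2 hε₁) hr) ?_
    ((closedBall_lineMap_subset_insert_ball hx hε₀ hε₁).trans (Set.insert_subset hxΩ hsub))
  rw [mem_closedBall, dist_right_lineMap, Real.norm_of_nonneg (sub_pos.2 hε₁).le, dist_comm]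
  exact mul_le_mul_of_nonneg_left hx (sub_pos.2 hε₁).le

lemma eventually_measure_ball_div_le [StrictConvexSpace ℝ E] [IsFiniteMeasure ν] (hν : ν ≪ μ)
    (hΩ : IsOpen Ω) (hx : x ∈ Ω) (hT : measureMaximalFn μ ν Ω x < T)
    (hsmall : ∀ᶠ p : E × ℝ in 𝓝 (x, 0), ν (ball p.1 p.2) / μ (ball p.1 p.2) ≤ T) (hr : 0 ≤ r) :
    ∀ᶠ q : E × E × ℝ in 𝓝 (x, z, r), q.1 ∈ ball q.2.1 q.2.2 → ball q.2.1 q.2.2 ⊆ Ω →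
      ν (ball q.2.1 q.2.2) / μ (ball q.2.1 q.2.2) ≤ T := by
  have hsnd : Tendsto Prod.snd (𝓝 (x, z, r)) (𝓝 (z, r)) := continuousAt_snd
  rcases lt_or_ge r (dist x z) with hfar | hxz
  · have : ∀ᶠ q : E × E × ℝ in 𝓝 (x, z, r), q.2.2 < dist q.1 q.2.1 :=
      ContinuousAt.eventually_lt (by fun_prop) (by fun_prop) hfar
    filter_upwards [this] with q hq hmem
    exact absurd hmem hq.not_gt
  rcases hr.eq_or_lt with rfl | hr
  · obtain rfl := dist_le_zero.1 hxz
    filter_upwards [hsnd.eventually hsmall] with q hq _ _ using hq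
  by_cases hsub : ball z r ⊆ Ω
  · have hlt := (measure_ball_div_le_measureMaximalFn_of_mem_closedBall hν hΩ hx hr hxz
      hsub).trans_lt hT
    have hcont := continuousAt_measure_ball_div_addHaar_ball (z := z) hν hr
    filter_upwards [hsnd.eventually (hcont.eventually_lt_const hlt)] with q hq _ _ using hq.le
  · obtain ⟨w, hw, hwΩ⟩ := Set.not_subset.1 hsub
    have : ∀ᶠ q : E × E × ℝ in 𝓝 (x, z, r), dist w q.2.1 < q.2.2 :=
      ContinuousAt.eventually_lt (by fun_prop) (by fun_prop) hw
    filter_upwards [this] with q hq _ hqΩ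
    exact absurd (hqΩ hq) hwΩ

lemma upperSemicontinuousAt_measureMaximalFn [StrictConvexSpace ℝ E] [Nontrivial E]
    [IsFiniteMeasure ν] (hν : ν ≪ μ) (hΩ : IsOpen Ω) (hx : x ∈ Ω)
    (hsmall : ∀ T > measureMaximalFn μ ν Ω x,
      ∀ᶠ p : E × ℝ in 𝓝 (x, 0), ν (ball p.1 p.2) / μ (ball p.1 p.2) ≤ T) :
    UpperSemicontinuousAt (measureMaximalFn μ ν Ω) x := by
  intro c hc
  obtain ⟨T, hxT, hTc⟩ := exists_between hc
  obtain ⟨R, hlarge⟩ := eventually_atTop.1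
    (eventually_forall_measure_ball_div_le (μ := μ) (ν := ν) (pos_of_gt hxT))
  have hcompact : IsCompact (closedBall x (R + 1) ×ˢ Set.Icc 0 R) :=
    (isCompact_closedBall _ _).prod isCompact_Icc
  have hbounded : ∀ᶠ y in 𝓝 x, ∀ p ∈ closedBall x (R + 1) ×ˢ Set.Icc 0 R, y ∈ ball p.1 p.2 →
      ball p.1 p.2 ⊆ Ω → ν (ball p.1 p.2) / μ (ball p.1 p.2) ≤ T :=
    hcompact.eventually_forall_of_forall_eventually fun _ hp ↦
      eventually_measure_ball_div_le hν hΩ hx hxT (hsmall T hxT) hp.2.1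
  filter_upwards [hbounded, ball_mem_nhds x one_pos] with y hy hyx
  refine (measureMaximalFn_le_iff.2 fun z r hyz hsub ↦ ?_).trans_lt hTc
  rcases le_total R r with hr | hr
  · exact hlarge r hr z
  · refine hy (z, r) ⟨?_, (pos_of_mem_ball hyz).le, hr⟩ hyz hsub
    rw [mem_ball] at hyx hyz
    rw [mem_closedBall]
    linarith [dist_triangle_left z x y]

lemma continuousOn_measureMaximalFn [StrictConvexSpace ℝ E] (hν : ν ≪ μ) (hνΩ : ν Ω ≠ ∞)
    (hΩ : IsOpen Ω) (hsmall : ∀ x ∈ Ω, ∀ T > measureMaximalFn μ ν Ω x,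
      ∀ᶠ p : E × ℝ in 𝓝 (x, 0), ν (ball p.1 p.2) / μ (ball p.1 p.2) ≤ T) :
    ContinuousOn (measureMaximalFn μ ν Ω) Ω := by
  rcases subsingleton_or_nontrivial E with _ | _
  · exact Set.subsingleton_of_subsingleton.continuousOn _
  have : IsFiniteMeasure (ν.restrict Ω) := isFiniteMeasure_restrict.2 hνΩ
  rw [← measureMaximalFn_restrict] at hsmall ⊢
  refine continuousOn_iff_lower_upperSemicontinuousOn.2
    ⟨lowerSemicontinuous_measureMaximalFn.lowerSemicontinuousOn Ω, fun x hx ↦ ?_⟩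
  refine UpperSemicontinuousAt.upperSemicontinuousWithinAt Ω <|
    upperSemicontinuousAt_measureMaximalFn
      (Measure.restrict_le_self.absolutelyContinuous.trans hν) hΩ hx fun T hT ↦ ?_
  filter_upwards [hsmall x hx T hT] with p hp
  grw [Measure.restrict_apply_le, hp]

end NormedSpace

section ApproxLimsup

/-- The upper approximate limit `f^∨(x)` with respect to the measure `μ`, valued in the extended
reals with the convention `inf ∅ = +∞`; for Lebesgue measure it is `upperApproxLimit`. -/
noncomputable def approxLimsup {X : Type*} [PseudoMetricSpace X] [MeasurableSpace X]
    (μ : Measure X) (f : X → ℝ) (x : X) : EReal :=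
  sInf ((fun t : ℝ ↦ (t : EReal)) '' {t : ℝ | Tendsto
    (fun r : ℝ ↦ μ {y | y ∈ ball x r ∧ t < f y} / μ (ball x r)) (𝓝[>] 0) (𝓝 0)})

variable {E : Type*} [NormedAddCommGroup E] [NormedSpace ℝ E] [FiniteDimensional ℝ E]
  [MeasurableSpace E] [BorelSpace E] {μ : Measure E} [μ.IsAddHaarMeasure] {f : E → ℝ}

lemma ae_tendsto_measure_inter_ball_div (s : Set E) :
    ∀ᵐ x ∂μ, x ∈ s → Tendsto (fun r ↦ μ (s ∩ ball x r) / μ (ball x r)) (𝓝[>] 0) (𝓝 1) := by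
  filter_upwards [ae_imp_of_ae_restrict (Besicovitch.ae_tendsto_measure_inter_div μ s)] with x hx hs
  refine (hx hs).congr' ?_
  filter_upwards [self_mem_nhdsWithin] with r hr
  have hball : (closedBall x r : Set E) =ᵐ[μ] ball x r := by
    rw [← ball_union_sphere]
    exact union_ae_eq_left_of_ae_eq_empty
      (ae_eq_empty.2 (Measure.addHaar_sphere_of_ne_zero μ x (ne_of_gt hr)))
  rw [measure_congr hball, measure_congr ((ae_eq_refl s).inter hball)]

lemma ae_le_of_approxLimsup_lt {s : Set E} {t : ℝ} (h : ∀ x ∈ s, approxLimsup μ f x < t) :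
    ∀ᵐ x ∂μ, x ∈ s → f x ≤ t := by
  filter_upwards [ae_tendsto_measure_inter_ball_div {x ∈ s | t < f x}] with x hdensity hxs
  by_contra! htf
  obtain ⟨_, ⟨a, ha, rfl⟩, hat⟩ := sInf_lt_iff.1 (h x hxs)
  refine zero_ne_one (tendsto_nhds_unique ?_ (hdensity ⟨hxs, htf⟩))
  refine tendsto_of_tendsto_of_tendsto_of_le_of_le tendsto_const_nhds ha (fun _ ↦ zero_le)
    fun r ↦ ?_
  dsimp only
  gcongr
  exact fun y hy ↦ ⟨hy.2, (EReal.coe_lt_coe_iff.1 hat).trans hy.1.2⟩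

lemma eventually_withDensity_ball_div_le {x : E} {T : ℝ≥0∞}
    (h : ∀ᶠ y in 𝓝 x, 0 ≤ f y ∧ approxLimsup μ f y < T) :
    ∀ᶠ p : E × ℝ in 𝓝 (x, 0),
      μ.withDensity (fun y ↦ ‖f y‖ₑ) (ball p.1 p.2) / μ (ball p.1 p.2) ≤ T := by
  induction T with
  | top => exact .of_forall fun _ ↦ le_top
  | coe t =>
    obtain ⟨η, hη, hball⟩ := eventually_nhds_iff_ball.1 h
    have hae : ∀ᵐ y ∂μ, y ∈ ball x η → f y ≤ t :=
      ae_le_of_approxLimsup_lt fun y hy ↦ (hball y hy).2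
    filter_upwards [prod_mem_nhds (ball_mem_nhds x (half_pos hη)) (Iio_mem_nhds (half_pos hη))]
      with ⟨z, r⟩ ⟨hz, hr⟩
    have hsub : ball z r ⊆ ball x η := by
      rw [mem_ball] at hz
      rw [Set.mem_Iio] at hr
      exact ball_subset_ball' (by linarith)
    refine ENNReal.div_le_of_le_mul ?_
    rw [withDensity_apply _ measurableSet_ball, ← setLIntegral_const]
    refine setLIntegral_mono_ae' measurableSet_ball ?_
    filter_upwards [hae] with y hy hyB
    rw [Real.enorm_of_nonneg (hball y (hsub hyB)).1]
    exact ENNReal.ofReal_le_of_le_toReal (hy (hsub hyB))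

theorem maximalFn_continuousOn_general [StrictConvexSpace ℝ E] {Ω : Set E} (hΩ : IsOpen Ω)
    (hf : IntegrableOn f Ω μ) (hf₀ : ∀ y ∈ Ω, 0 ≤ f y)
    (husc : UpperSemicontinuousOn (approxLimsup μ f) Ω)
    (hM : ∀ x ∈ Ω, approxLimsup μ f x ≤ measureMaximalFn μ (μ.withDensity (‖f ·‖ₑ)) Ω x) :
    ContinuousOn (measureMaximalFn μ (μ.withDensity (‖f ·‖ₑ)) Ω) Ω := by
  refine continuousOn_measureMaximalFn (withDensity_absolutelyContinuous _ _) ?_ hΩ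
    fun x hx T hT ↦ eventually_withDensity_ball_div_le ?_
  · rw [withDensity_apply _ hΩ.measurableSet]
    exact hf.hasFiniteIntegral.ne
  · have hlt := husc x hx T ((hM x hx).trans_lt (EReal.coe_ennreal_lt_coe_ennreal_iff.2 hT))
    rw [hΩ.nhdsWithin_eq hx] at hlt
    filter_upwards [hΩ.mem_nhds hx, hlt] with y hy hlt using ⟨hf₀ y hy, hlt⟩

end ApproxLimsup

lemma maximalFn_eq_measureMaximalFn {d : ℕ} (Ω : Set (EuclideanSpace ℝ (Fin d)))
    (f : EuclideanSpace ℝ (Fin d) → ℝ) :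
    maximalFn Ω f = measureMaximalFn volume (volume.withDensity (‖f ·‖ₑ)) Ω := by
  funext x
  refine iSup_congr fun z ↦ iSup_congr fun r ↦ iSup_comm.trans (iSup_congr fun hx ↦ ?_)
  simp only [iSup_pos (pos_of_mem_ball hx), withDensity_apply _ measurableSet_ball,
    Real.enorm_eq_ofReal_abs]

/-- Let `Ω ⊆ ℝᵈ` be a nonempty open set and `f ∈ L¹(Ω)` nonnegative.
If the upper approximate limit `f^∨` is upper semicontinuous on `Ω` and
`M_Ω f(x) ≥ f^∨(x)` for every `x ∈ Ω`, then the non-centered maximal function `M_Ω f` is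
continuous on `Ω`. -/
theorem maximalFn_continuousOn {d : ℕ}
    (Ω : Set (EuclideanSpace ℝ (Fin d))) (hΩ : IsOpen Ω) (hΩne : Ω.Nonempty)
    (f : EuclideanSpace ℝ (Fin d) → ℝ) (hf : IntegrableOn f Ω volume)
    (hf0 : ∀ y, 0 ≤ f y)
    (husc : ∀ x ∈ Ω, UpperSemicontinuousWithinAt (upperApproxLimit f) Ω x)
    (hM : ∀ x ∈ Ω, upperApproxLimit f x ≤ (maximalFn Ω f x : EReal)) :
    ContinuousOn (maximalFn Ω f) Ω := by
  rw [maximalFn_eq_measureMaximalFn] at hM ⊢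
  exact maximalFn_continuousOn_general hΩ hf (fun y _ ↦ hf0 y) husc hM
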